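/- Let $V_1, V_2, V_3$ be modules over a commutative ring (vector spaces), and $D_1 : V_1 \to V_2$, $D_2 : V_2 \to V_3$ linear maps with $\mathrm{Range}(D_1) = \mathrm{Ker}(D_2)$ (exactness at $V_2$). Let $W_1 \le V_1$ and $W_2 \le V_2$ be submodules with $D_1(W_1) \subseteq W_2$, and let $\Pi_1 : V_1 \to V_1$, $\Pi_2 : V_2 \to V_2$ be linear maps such that $\mathrm{Range}(\Pi_1) \subseteq W_1$, $\Pi_2 w = w$ for all $w \in W_2$, and the commutativity property $\Pi_2 \circ D_1 = D_1 \circ \Pi_1$ holds. Then the subcomplex is exact at $W_2$, i.e., $D_1(W_1) = \{ w \in W_2 : D_2 w = 0 \}$. -/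

import Mathlib

/-- Exactness of the continuous sequence transfers to a subcomplex via commuting
projections: if `Range D₁ = Ker D₂`, `D₁ W₁ ⊆ W₂`, `Range Π₁ ⊆ W₁`, `Π₂` fixes `W₂`
pointwise, and `Π₂ ∘ D₁ = D₁ ∘ Π₁`, then `D₁(W₁) = {w ∈ W₂ : D₂ w = 0}`. -/
theorem subcomplex_exactness
    {R : Type*} [CommRing R]
    {V₁ V₂ V₃ : Type*}
    [AddCommGroup V₁] [Module R V₁] [AddCommGroup V₂] [Module R V₂]
    [AddCommGroup V₃] [Module R V₃]
    (D1 : V₁ →ₗ[R] V₂) (D2 : V₂ →ₗ[R] V₃)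
    (hexact : LinearMap.range D1 = LinearMap.ker D2)
    (W₁ : Submodule R V₁) (W₂ : Submodule R V₂)
    (hmap : Submodule.map D1 W₁ ≤ W₂)
    (Pi1 : V₁ →ₗ[R] V₁) (Pi2 : V₂ →ₗ[R] V₂)
    (hrange : LinearMap.range Pi1 ≤ W₁)
    (hfix : ∀ w ∈ W₂, Pi2 w = w)
    (hcomm : Pi2 ∘ₗ D1 = D1 ∘ₗ Pi1) :
    Submodule.map D1 W₁ = W₂ ⊓ LinearMap.ker D2 := by
  rw [← hexact]
  apply le_antisymm
  · exact le_inf hmap LinearMap.map_le_range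
  · rintro w ⟨hw, v, rfl⟩
    refine ⟨Pi1 v, hrange ⟨v, rfl⟩, ?_⟩
    have h := LinearMap.congr_fun hcomm v
    exact h.symm.trans (hfix _ hw)
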